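/- Let r and n be positive integers, let O be any positive-dominant total order on C(r,n), and let n̄ = (n_0, n_1, …, n_k) be a composition of n. Then, as an identity of polynomials in the variables p and a with integer coefficients, Σ_{f ∈ N_0^{r,n}(n̄)} p^{inv_O(f)} a^{col(f)} = ∏_{i=n_0}^{n−1} (1 + Σ_{j=1}^{r−1} a^j p^{j+i}) · [n; n_0, n_1, …, n_k]_p. -/

import Mathlib

open scoped Classical

abbrev CI : Type := ℕ × ℕ

/-- Membership in the set `C(r,n)` of colored integers. -/
def memC (r n : ℕ) (x : CI) : Prop :=
  x.1 ≤ n ∧ x.2 < r ∧ (x.1 = 0 → x.2 = 0)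

/-- A positive-dominant (strict) total order on the colored integers `C(r,n)`. -/
structure PDOrder (r n : ℕ) where
  lt : CI → CI → Prop
  irrefl : ∀ x, memC r n x → ¬lt x x
  trans : ∀ x y z, memC r n x → memC r n y → memC r n z → lt x y → lt y z → lt x z
  trichotomy : ∀ x y, memC r n x → memC r n y → x = y ∨ lt x y ∨ lt y x
  nat_mono : ∀ i j : ℕ, i ≤ n → j ≤ n → i < j → lt (i, 0) (j, 0)
  pos_dom : ∀ i j c : ℕ, i ≤ n → 1 ≤ j → j ≤ n → 1 ≤ c → c < r → lt (j, c) (i, 0)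

/-- A colored permutation in `G(r,n) = Z_r ≀ S_n`. -/
structure ColoredPerm (r n : ℕ) where
  perm : Equiv.Perm (Fin n)
  color : Fin n → Fin r

/-- The colored entry `π(i)^{c_i}` (values are taken in `[1,n]`). -/
def cval {r n : ℕ} (γ : ColoredPerm r n) (i : Fin n) : CI :=
  ((γ.perm i : ℕ) + 1, (γ.color i : ℕ))

/-- Entry `γ(j)` for `j ∈ {0,…,n}`, with the convention `γ(0) = 0`. -/
def centry {r n : ℕ} (γ : ColoredPerm r n) (j : ℕ) : CI :=
  if h : 1 ≤ j ∧ j ≤ n then cval γ ⟨j - 1, by omega⟩ else (0, 0)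

/-- Descent set `Des(γ) ⊆ {0,…,n-1}` with respect to the relation `lt`. -/
noncomputable def DesSet {r n : ℕ} (lt : CI → CI → Prop) (γ : ColoredPerm r n) : Finset ℕ :=
  (Finset.range n).filter fun j => lt (centry γ (j + 1)) (centry γ j)

noncomputable def desStat {r n : ℕ} (lt : CI → CI → Prop) (γ : ColoredPerm r n) : ℕ :=
  (DesSet lt γ).card

noncomputable def majStat {r n : ℕ} (lt : CI → CI → Prop) (γ : ColoredPerm r n) : ℕ :=
  ∑ j ∈ DesSet lt γ, j

noncomputable def invStat {r n : ℕ} (lt : CI → CI → Prop) (γ : ColoredPerm r n) : ℕ :=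
  ((Finset.univ : Finset (Fin n × Fin n)).filter fun p =>
    p.1 < p.2 ∧ lt (cval γ p.2) (cval γ p.1)).card

noncomputable def lenStat {r n : ℕ} (lt : CI → CI → Prop) (γ : ColoredPerm r n) : ℕ :=
  invStat lt γ +
    ∑ i ∈ Finset.univ.filter (fun i => 0 < (γ.color i : ℕ)),
      ((γ.perm i : ℕ) + 1 + (γ.color i : ℕ) - 1)

def colStat {r n : ℕ} (γ : ColoredPerm r n) : ℕ := ∑ i, (γ.color i : ℕ)

/-- The inverse colored permutation `γ⁻¹`. -/
def cinv {r n : ℕ} (γ : ColoredPerm r n) : ColoredPerm r n :=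
  ⟨γ.perm⁻¹, fun i => γ.color (γ.perm⁻¹ i)⟩

/-- An element of `N_0^{r,n}`: a sequence of colored nonnegative integers. -/
structure ColoredSeq (r n : ℕ) where
  val : Fin n → ℕ
  col : Fin n → ℕ
  col_lt : ∀ i, col i < r
  zero_col : ∀ i, val i = 0 → col i = 0

/-- `γ` is the colored permutation `γ_O(f)` obtained by sorting the colored positions
`i^{cf_i}` by increasing value `f_i`, ties broken by increasing `lt`-order. -/
def isSorted {r n : ℕ} (lt : CI → CI → Prop) (f : ColoredSeq r n) (γ : ColoredPerm r n) : Prop :=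
  (∀ i, (γ.color i : ℕ) = f.col (γ.perm i)) ∧
    ∀ i j : Fin n, i < j →
      f.val (γ.perm i) < f.val (γ.perm j) ∨
        (f.val (γ.perm i) = f.val (γ.perm j) ∧ lt (cval γ i) (cval γ j))

def maxf {r n : ℕ} (f : ColoredSeq r n) : ℕ := Finset.univ.sup f.val
def sumf {r n : ℕ} (f : ColoredSeq r n) : ℕ := ∑ i, f.val i
def colf {r n : ℕ} (f : ColoredSeq r n) : ℕ := ∑ i, f.col i

def NSet (r n k : ℕ) (nv : ℕ → ℕ) : Set (ColoredSeq r n) :=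
  {f | ∀ j ≤ k, (Finset.univ.filter fun i => f.val i = j).card = nv j}


-- Statement 4
noncomputable def qintP (m : ℕ) : MvPolynomial (Fin 2) ℤ :=
  ∑ i ∈ Finset.range m, MvPolynomial.X 0 ^ i

noncomputable def qfactP (m : ℕ) : MvPolynomial (Fin 2) ℤ :=
  ∏ i ∈ Finset.range m, qintP (i + 1)

/-! Fix the coloring of `f`. Sorting the positions by the induced order then gives a permutation `e`
that places the `s` colored positions first, by positive dominance. Writing the values of `f` in
this order, as a word `w`, the length of `γ_O(f)` becomes the number of inversions of `w` plus a
term that only depends on the coloring, and the condition that the value `0` carries no color says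
that the first `s` letters of `w` are nonzero. Inserting letters one at a time as in MacMahon's
theorem, such words are counted by
`p^(s n_0) [n - n_0]_p ⋯ [n - n_0 - s + 1]_p [n - s]_p! / ([n_0]_p! ⋯ [n_k]_p!)`.
The sum over all sets of colored positions is then Rothe's `q`-binomial theorem.
-/

section QAnalogues

open Finset

variable {R : Type*} [CommSemiring R] (p : R)

/-- The `q`-integer `[m]_p`. -/
def qInt (m : ℕ) : R := ∑ i ∈ range m, p ^ i

/-- The `q`-factorial `[m]_p!`. -/
def qFactorial (m : ℕ) : R := ∏ i ∈ range m, qInt p (i + 1)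

/-- The falling `q`-factorial `[m]_p [m-1]_p ⋯ [m-s+1]_p`. The truncated subtraction makes it vanish
for `m < s`. -/
def qDescFactorial (m s : ℕ) : R := ∏ i ∈ range s, qInt p (m - i)

/-- The Gaussian binomial coefficient, defined by the `q`-Pascal rule so that no division is
needed. -/
def qBinomial : ℕ → ℕ → R
  | _, 0 => 1
  | 0, _ + 1 => 0
  | m + 1, s + 1 => qBinomial m (s + 1) + p ^ (m - s) * qBinomial m s

lemma qInt_zero : qInt p 0 = 0 := sum_range_zero _

lemma qInt_add (a b : ℕ) : qInt p (a + b) = qInt p a + p ^ a * qInt p b := by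
  simp only [qInt, sum_range_add, mul_sum, pow_add]

lemma qFactorial_zero : qFactorial p 0 = 1 := prod_range_zero _

lemma qFactorial_succ (m : ℕ) : qFactorial p (m + 1) = qFactorial p m * qInt p (m + 1) :=
  prod_range_succ _ _

lemma qDescFactorial_zero (m : ℕ) : qDescFactorial p m 0 = 1 := prod_range_zero _

lemma qDescFactorial_succ (m s : ℕ) :
    qDescFactorial p m (s + 1) = qDescFactorial p m s * qInt p (m - s) :=
  prod_range_succ _ _

lemma qDescFactorial_succ' (m s : ℕ) :
    qDescFactorial p m (s + 1) = qInt p m * qDescFactorial p (m - 1) s := by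
  simp only [qDescFactorial, prod_range_succ', Nat.sub_zero, Nat.sub_sub, add_comm 1, mul_comm]

lemma qDescFactorial_eq_zero_of_lt {m s : ℕ} (h : m < s) : qDescFactorial p m s = 0 :=
  prod_eq_zero (mem_range.mpr h) (by rw [Nat.sub_self, qInt_zero])

lemma qDescFactorial_mul_qFactorial {m s : ℕ} (h : s ≤ m) :
    qDescFactorial p m s * qFactorial p (m - s) = qFactorial p m := by
  induction s with
  | zero => rw [qDescFactorial_zero, one_mul, Nat.sub_zero]
  | succ s ih =>
    obtain ⟨d, rfl⟩ := Nat.exists_eq_add_of_le' h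
    rw [← ih (Nat.le_of_succ_le h), qDescFactorial_succ, Nat.add_sub_cancel,
      show d + (s + 1) - s = d + 1 by omega, qFactorial_succ]
    ring

lemma qBinomial_eq_zero_of_lt {m s : ℕ} (h : m < s) : qBinomial p m s = 0 := by
  induction m generalizing s with
  | zero => obtain _ | s := s <;> [omega; rfl]
  | succ m ih =>
    obtain _ | s := s
    · omega
    · rw [qBinomial, ih (by omega), ih (by omega), mul_zero, add_zero]

lemma qBinomial_mul_qFactorial (m s : ℕ) :
    qBinomial p m s * qFactorial p s = qDescFactorial p m s := by
  induction m generalizing s with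
  | zero =>
    obtain _ | s := s
    · rw [qBinomial, qFactorial_zero, qDescFactorial_zero, one_mul]
    · rw [qBinomial, zero_mul, qDescFactorial_eq_zero_of_lt p s.succ_pos]
  | succ m ih =>
    obtain _ | s := s
    · rw [qBinomial, qFactorial_zero, qDescFactorial_zero, one_mul]
    calc qBinomial p (m + 1) (s + 1) * qFactorial p (s + 1)
        = qBinomial p m (s + 1) * qFactorial p (s + 1)
            + p ^ (m - s) * qInt p (s + 1) * (qBinomial p m s * qFactorial p s) := by
          rw [qBinomial, qFactorial_succ]; ring
      _ = (qInt p (m - s) + p ^ (m - s) * qInt p (s + 1)) * qDescFactorial p m s := by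
          rw [ih, ih, qDescFactorial_succ]; ring
      _ = qInt p (m - s + (s + 1)) * qDescFactorial p m s := by
          rw [← qInt_add]
      _ = qDescFactorial p (m + 1) (s + 1) := by
          rw [qDescFactorial_succ', Nat.add_sub_cancel]
          obtain h | h := le_or_gt s m
          · rw [← add_assoc, Nat.sub_add_cancel h]
          · rw [qDescFactorial_eq_zero_of_lt p h, mul_zero, mul_zero]

lemma esymm_cons_succ (a : R) (M : Multiset R) (s : ℕ) :
    (a ::ₘ M).esymm (s + 1) = M.esymm (s + 1) + a * M.esymm s := by
  simp only [Multiset.esymm, Multiset.powersetCard_cons, Multiset.map_add, Multiset.sum_add,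
    Multiset.map_map, Function.comp_def, Multiset.prod_cons, Multiset.sum_map_mul_left]

lemma esymm_range_pow (m s : ℕ) :
    ((Multiset.range m).map (p ^ ·)).esymm s = p ^ s.choose 2 * qBinomial p m s := by
  induction m generalizing s with
  | zero => obtain _ | s := s <;> simp [Multiset.esymm, qBinomial, Multiset.powersetCard_zero_right]
  | succ m ih =>
    obtain _ | s := s
    · simp [Multiset.esymm, qBinomial]
    rw [Multiset.range_succ, Multiset.map_cons, esymm_cons_succ, ih, ih, qBinomial, mul_add]
    congr 1
    obtain h | h := le_or_gt s m
    · have choose_two : (s + 1).choose 2 = s + s.choose 2 := by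
        rw [Nat.choose_succ_succ', Nat.choose_one_right]
      rw [← mul_assoc, ← mul_assoc, ← pow_add, ← pow_add]
      congr 2
      omega
    · rw [qBinomial_eq_zero_of_lt p h]
      simp only [mul_zero]

/-- Grouping by cardinality, the elementary symmetric functions of `1, p, …, p^(m-1)` appear. -/
lemma sum_finset_prod_mul_pow (m : ℕ) (u : R) (h : ℕ → R) :
    ∑ S : Finset (Fin m), (∏ x ∈ S, u * p ^ (x : ℕ)) * h #S =
      ∑ s ∈ range (m + 1), p ^ s.choose 2 * qBinomial p m s * u ^ s * h s := by
  have hpow : (univ : Finset (Fin m)).val.map (fun x : Fin m => p ^ (x : ℕ)) =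
      (Multiset.range m).map (p ^ ·) := by
    rw [Fin.univ_val_map, List.ofFn_eq_map, Multiset.range, Multiset.map_coe,
      ← List.map_coe_finRange_eq_range, List.map_map, Function.comp_def]
  rw [← powerset_univ, sum_powerset, card_fin]
  refine sum_congr rfl fun s _ => ?_
  rw [← esymm_range_pow, ← hpow, esymm_map_val, sum_mul, sum_mul]
  refine sum_congr rfl fun S hS => ?_
  rw [(mem_powersetCard.mp hS).2, prod_mul_distrib, prod_const, (mem_powersetCard.mp hS).2,
    mul_comm (u ^ s)]

/-- Rothe's `q`-binomial theorem. -/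
lemma prod_range_one_add_mul_pow (m : ℕ) (u : R) :
    ∏ i ∈ range m, (1 + u * p ^ i) =
      ∑ s ∈ range (m + 1), p ^ s.choose 2 * qBinomial p m s * u ^ s := by
  rw [prod_range, prod_one_add, powerset_univ]
  simpa only [mul_one] using sum_finset_prod_mul_pow p m u fun _ => 1

lemma sum_finset_prod_mul_qDescFactorial {m n : ℕ} (h : m ≤ n) (u : R) :
    ∑ S : Finset (Fin n), (∏ x ∈ S, u * p ^ (x : ℕ)) *
        (p ^ (#S * m) * qDescFactorial p (n - m) #S * qFactorial p (n - #S)) =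
      (∏ i ∈ Ico m n, (1 + u * p ^ i)) * qFactorial p n := by
  have term_eq : ∀ s ∈ range (n + 1),
      p ^ s.choose 2 * qBinomial p n s * u ^ s *
          (p ^ (s * m) * qDescFactorial p (n - m) s * qFactorial p (n - s)) =
        p ^ s.choose 2 * qBinomial p (n - m) s * (u * p ^ m) ^ s * qFactorial p n := by
    intro s hs
    rw [← qDescFactorial_mul_qFactorial p (mem_range_succ_iff.mp hs),
      ← qBinomial_mul_qFactorial p n, ← qBinomial_mul_qFactorial p (n - m)]
    ring
  calc _ = (∑ s ∈ range (n + 1), p ^ s.choose 2 * qBinomial p (n - m) s * (u * p ^ m) ^ s) *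
          qFactorial p n := by
        rw [sum_finset_prod_mul_pow p n u fun s =>
          p ^ (s * m) * qDescFactorial p (n - m) s * qFactorial p (n - s), sum_mul]
        exact sum_congr rfl term_eq
    _ = (∏ i ∈ range (n - m), (1 + u * p ^ m * p ^ i)) * qFactorial p n := by
        rw [prod_range_one_add_mul_pow]
        congr 1
        refine (sum_subset (range_mono (by omega)) fun s _ hs => ?_).symm
        rw [qBinomial_eq_zero_of_lt p (by simpa using hs), mul_zero, zero_mul]
    _ = _ := by simp only [prod_Ico_eq_prod_range, pow_add, mul_assoc]

end QAnalogues

section FunctionSupport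

open Finset

variable {R : Type*} [CommSemiring R]
variable {ι C : Type*} [Fintype ι] [DecidableEq ι] [Fintype C] [DecidableEq C] [Zero C]

lemma filter_support_eq_piFinset (S : Finset ι) :
    ({c | ({x | c x ≠ 0} : Finset ι) = S} : Finset (ι → C)) =
      Fintype.piFinset fun x => if x ∈ S then ({t | t ≠ 0} : Finset C) else {0} := by
  ext c
  simp only [mem_filter_univ, Finset.ext_iff, Fintype.mem_piFinset]
  refine forall_congr' fun x => ?_
  split_ifs with hx <;> simp [hx]

lemma sum_prod_of_support_eq (g : ι → C → R) (hg : ∀ x, g x 0 = 1) (S : Finset ι) :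
    ∑ c : ι → C with ({x | c x ≠ 0} : Finset ι) = S, ∏ x, g x (c x) =
      ∏ x ∈ S, ∑ t with t ≠ 0, g x t := by
  have factor_eq (x : ι) : ∑ t ∈ (if x ∈ S then ({t | t ≠ 0} : Finset C) else {0}), g x t =
      if x ∈ S then ∑ t with t ≠ 0, g x t else 1 := by
    split_ifs
    · rfl
    · rw [sum_singleton, hg]
  simp only [filter_support_eq_piFinset, ← prod_univ_sum, factor_eq, prod_ite_mem, univ_inter]

lemma sum_pi_prod_mul_support (g : ι → C → R) (hg : ∀ x, g x 0 = 1) (h : Finset ι → R) :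
    ∑ c : ι → C, (∏ x, g x (c x)) * h {x | c x ≠ 0} =
      ∑ S, (∏ x ∈ S, ∑ t with t ≠ 0, g x t) * h S := by
  rw [← sum_fiberwise univ fun c : ι → C => ({x | c x ≠ 0} : Finset ι)]
  refine sum_congr rfl fun S _ => ?_
  rw [← sum_prod_of_support_eq g hg, sum_mul]
  refine sum_congr rfl fun c hc => ?_
  rw [mem_filter_univ] at hc
  rw [hc]

end FunctionSupport

section Words

open Finset

variable {α : Type*} [LinearOrder α] {n : ℕ}

/-- The number of inversions of a word. -/
def wordInv (w : Fin n → α) : ℕ :=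
  #{q : Fin n × Fin n | q.1 < q.2 ∧ w q.2 < w q.1}

/-- The content of a word: the number of occurrences of each letter. -/
def wordContent (w : Fin n → α) (a : α) : ℕ := #{i | w i = a}

lemma wordContent_cons (a : α) (w : Fin n → α) :
    wordContent (Fin.cons a w : Fin (n + 1) → α) = wordContent w + Pi.single a 1 := by
  ext b
  simp only [wordContent, Fin.card_filter_univ_succ', Fin.cons_zero, Fin.cons_succ, Pi.add_apply,
    Pi.single_apply, add_comm, eq_comm (a := a)]

lemma wordContent_comp_perm (w : Fin n → α) (e : Equiv.Perm (Fin n)) :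
    wordContent (w ∘ e) = wordContent w :=
  funext fun _ => card_equiv e fun _ => by simp only [mem_filter_univ, Function.comp_apply]

variable {R : Type*} [CommSemiring R] (p : R)

lemma sum_pow_mul_qInt (ν : α → ℕ) (s : Finset α) :
    ∑ a ∈ s, p ^ (∑ b ∈ s with b < a, ν b) * qInt p (ν a) = qInt p (∑ a ∈ s, ν a) := by
  induction s using Finset.induction_on_max with
  | empty => simp only [sum_empty, qInt_zero]
  | insert a s ha ih =>
    have not_mem : a ∉ s := fun h => lt_irrefl a (ha a h)
    have below_mem : ∀ b ∈ s, {c ∈ insert a s | c < b} = {c ∈ s | c < b} := fun b hb => by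
      rw [filter_insert, if_neg (ha b hb).not_gt]
    have below_max : {c ∈ insert a s | c < a} = s := by
      rw [filter_insert, if_neg (lt_irrefl a), filter_true_of_mem ha]
    rw [sum_insert not_mem, sum_insert not_mem, add_comm (ν a), qInt_add, ← ih, below_max, add_comm]
    congr 1
    exact sum_congr rfl fun b hb => by rw [below_mem b hb]

variable [Fintype α]

lemma wordInv_cons (a : α) (w : Fin n → α) :
    wordInv (Fin.cons a w : Fin (n + 1) → α) = (∑ b with b < a, wordContent w b) + wordInv w := by
  have smaller : ∑ b with b < a, wordContent w b = ∑ i, if w i < a then 1 else 0 := by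
    rw [← card_filter]
    simpa only [wordContent, mem_filter_univ] using
      sum_card_fiberwise_eq_card_filter univ ({b | b < a} : Finset α) w
  rw [smaller]
  simp only [wordInv, card_filter, Fintype.sum_prod_type, Fin.sum_univ_succ, Fin.cons_zero,
    Fin.cons_succ, Fin.succ_pos, Fin.succ_lt_succ_iff, Fin.not_lt_zero, true_and, false_and,
    if_false, zero_add]

/-- The inversion generating function of the words with content `ν` that satisfy `Q`. -/
noncomputable def wordGenFun (ν : α → ℕ) (Q : (Fin n → α) → Prop) : R :=
  ∑ w : Fin n → α with wordContent w = ν ∧ Q w, p ^ wordInv w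

lemma wordGenFun_succ (ν : α → ℕ) (Q : (Fin (n + 1) → α) → Prop) :
    wordGenFun p ν Q = ∑ a, p ^ (∑ b with b < a, ν b) *
      ∑ w : Fin n → α with wordContent w + Pi.single a 1 = ν ∧ Q (Fin.cons a w), p ^ wordInv w := by
  rw [wordGenFun, sum_filter, ← (Fin.consEquiv fun _ => α).sum_comp, Fintype.sum_prod_type]
  refine sum_congr rfl fun a _ => ?_
  simp only [Fin.consEquiv, Equiv.coe_fn_mk, wordContent_cons]
  rw [← sum_filter, mul_sum]
  refine sum_congr rfl fun w hw => ?_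
  have content_below : ∀ b ∈ ({b | b < a} : Finset α), wordContent w b = ν b := fun b hb => by
    rw [← (mem_filter_univ w |>.mp hw).1, Pi.add_apply,
      Pi.single_eq_of_ne (mem_filter_univ b |>.mp hb).ne, add_zero]
  rw [wordInv_cons, pow_add, sum_congr rfl content_below]

lemma prod_qFactorial_add_single (ν : α → ℕ) (a : α) :
    ∏ b, qFactorial p ((ν + Pi.single a 1 : α → ℕ) b) =
      qInt p (ν a + 1) * ∏ b, qFactorial p (ν b) := by
  rw [← mul_prod_erase univ _ (mem_univ a), ← mul_prod_erase univ _ (mem_univ a), Pi.add_apply,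
    Pi.single_eq_same, qFactorial_succ]
  rw [prod_congr rfl fun b hb => by
    rw [Pi.add_apply, Pi.single_eq_of_ne (ne_of_mem_erase hb), add_zero]]
  ring

lemma sum_add_single_mul_prod_qFactorial {ν : α → ℕ} {a : α} {Q : (Fin n → α) → Prop} {X : R}
    (hX : ∀ ν', ν' + Pi.single a 1 = ν → wordGenFun p ν' Q * ∏ b, qFactorial p (ν' b) = X) :
    (∑ w : Fin n → α with wordContent w + Pi.single a 1 = ν ∧ Q w, p ^ wordInv w) *
      ∏ b, qFactorial p (ν b) = qInt p (ν a) * X := by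
  obtain ha | ha := Nat.eq_zero_or_pos (ν a)
  · have no_word : ∀ w : Fin n → α, ¬(wordContent w + Pi.single a 1 = ν ∧ Q w) := fun w hw => by
      have := congrFun hw.1 a
      rw [Pi.add_apply, Pi.single_eq_same] at this
      omega
    rw [filter_false_of_mem fun w _ => no_word w, sum_empty, zero_mul, ha, qInt_zero, zero_mul]
  · have single_le : Pi.single a 1 ≤ ν := update_le_iff.mpr ⟨ha, fun _ _ => Nat.zero_le _⟩
    obtain ⟨ν', rfl⟩ : ∃ ν' : α → ℕ, ν' + Pi.single a 1 = ν := ⟨_, tsub_add_cancel_of_le single_le⟩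
    simp only [add_left_inj]
    rw [← hX ν' rfl, prod_qFactorial_add_single, Pi.add_apply, Pi.single_eq_same, wordGenFun]
    ring

lemma wordGenFun_succ_mul_prod_qFactorial {ν : α → ℕ} {s : Finset α} {Q : (Fin (n + 1) → α) → Prop}
    {Q' : (Fin n → α) → Prop} {X : R} (hQ : ∀ a w, Q (Fin.cons a w) ↔ a ∈ s ∧ Q' w)
    (hX : ∀ a ∈ s, ∀ ν', ν' + Pi.single a 1 = ν →
      wordGenFun p ν' Q' * ∏ b, qFactorial p (ν' b) = X) :
    wordGenFun p ν Q * ∏ b, qFactorial p (ν b) =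
      (∑ a ∈ s, p ^ (∑ b with b < a, ν b) * qInt p (ν a)) * X := by
  rw [wordGenFun_succ, ← sum_subset (subset_univ s), sum_mul, sum_mul]
  · refine sum_congr rfl fun a ha => ?_
    simp only [hQ, ha, true_and]
    rw [mul_assoc, sum_add_single_mul_prod_qFactorial p (hX a ha), mul_assoc]
  · intro a _ ha
    simp only [hQ, ha, false_and, and_false, filter_false, sum_empty, mul_zero]

/-- MacMahon's theorem on inversions of multiset permutations. -/
theorem wordGenFun_true_mul_prod_qFactorial {ν : α → ℕ} (hν : ∑ a, ν a = n) :
    wordGenFun p ν (fun _ : Fin n → α => True) * ∏ a, qFactorial p (ν a) = qFactorial p n := by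
  induction n generalizing ν with
  | zero =>
    obtain rfl : ν = 0 := funext fun a => sum_eq_zero_iff.mp hν a (mem_univ a)
    have content_eq (w : Fin 0 → α) : wordContent w = 0 := funext fun a => by simp [wordContent]
    simp [wordGenFun, content_eq, wordInv, qFactorial_zero]
  | succ n ih =>
    rw [wordGenFun_succ_mul_prod_qFactorial p (s := univ) (Q' := fun _ => True)
      (X := qFactorial p n) (by simp only [mem_univ, and_self, implies_true]),
      sum_pow_mul_qInt, hν, qFactorial_succ, mul_comm]
    rintro a - ν' rfl
    exact ih (by simpa [sum_add_distrib] using hν)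

theorem wordGenFun_ne_bot_mul_prod_qFactorial [OrderBot α] {ν : α → ℕ} {s : ℕ} (hs : s ≤ n)
    (hν : ∑ a, ν a = n) :
    wordGenFun p ν (fun w : Fin n → α => ∀ i : Fin n, (i : ℕ) < s → w i ≠ ⊥) *
        ∏ a, qFactorial p (ν a) =
      p ^ (s * ν ⊥) * qDescFactorial p (n - ν ⊥) s * qFactorial p (n - s) := by
  induction s generalizing n ν with
  | zero =>
    simpa [qDescFactorial_zero] using wordGenFun_true_mul_prod_qFactorial p hν
  | succ s ih =>
    obtain ⟨n, rfl⟩ := Nat.exists_eq_add_of_le' (Nat.one_le_of_lt hs)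
    have sum_ne_bot : ∑ a ∈ univ.erase ⊥, ν a = n + 1 - ν ⊥ := by
      rw [← hν, ← add_sum_erase univ ν (mem_univ ⊥), Nat.add_sub_cancel_left]
    have weight_eq : ∑ a ∈ univ.erase ⊥, p ^ (∑ b with b < a, ν b) * qInt p (ν a) =
        p ^ ν ⊥ * qInt p (n + 1 - ν ⊥) := by
      rw [← sum_ne_bot, ← sum_pow_mul_qInt, mul_sum]
      refine sum_congr rfl fun a ha => ?_
      have split_bot : ({b | b < a} : Finset α) = insert ⊥ {b ∈ univ.erase (⊥ : α) | b < a} := by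
        ext b
        have := bot_lt_iff_ne_bot.mpr (ne_of_mem_erase ha)
        by_cases hb : b = ⊥ <;> simp [hb, this]
      rw [split_bot, sum_insert (by simp), pow_add, mul_assoc]
    rw [wordGenFun_succ_mul_prod_qFactorial p (s := univ.erase ⊥)
      (Q' := fun w => ∀ i : Fin n, (i : ℕ) < s → w i ≠ ⊥)
      (X := p ^ (s * ν ⊥) * qDescFactorial p (n - ν ⊥) s * qFactorial p (n - s)), weight_eq,
      qDescFactorial_succ', Nat.add_sub_add_right, Nat.sub_right_comm, Nat.add_sub_cancel]
    · ring
    · intro a w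
      simp [Fin.forall_fin_succ]
    · rintro a ha ν' rfl
      rw [Pi.add_apply, Pi.single_eq_of_ne (ne_of_mem_erase ha).symm, add_zero]
      exact ih (by omega) (by simpa [sum_add_distrib] using hν)

end Words

section SortingPositions

open Finset

variable {n : ℕ} {prec : Fin n → Fin n → Prop} [Std.Asymm prec] {e : Equiv.Perm (Fin n)}

lemma prec_iff_lt_of_sorted (he : ∀ i j, i < j → prec (e i) (e j)) (i j : Fin n) :
    prec (e i) (e j) ↔ i < j := by
  refine ⟨fun h => ?_, he i j⟩
  obtain hij | rfl | hji := lt_trichotomy i j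
  · exact hij
  · exact absurd h (Std.Asymm.asymm _ _ h)
  · exact absurd h (Std.Asymm.asymm _ _ (he j i hji))

lemma wordInv_comp_eq_card_of_sorted {α : Type*} [LinearOrder α] (v : Fin n → α)
    (he : ∀ i j, i < j → prec (e i) (e j)) :
    wordInv (v ∘ e) = #{q : Fin n × Fin n | prec q.1 q.2 ∧ v q.2 < v q.1} :=
  card_equiv (e.prodCongr e) fun q => by
    simp only [mem_filter_univ, Equiv.prodCongr_apply, Prod.map, prec_iff_lt_of_sorted he,
      Function.comp_apply]

lemma mem_iff_lt_card_of_isLowerSet {S : Finset (Fin n)} (hS : IsLowerSet (S : Set (Fin n)))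
    (i : Fin n) : i ∈ S ↔ (i : ℕ) < #S := by
  constructor
  · intro hi
    have Iic_subset : Iic i ⊆ S := fun j hj => hS (mem_Iic.mp hj) hi
    simpa using card_le_card Iic_subset
  · contrapose!
    intro hi
    have subset_Iio : S ⊆ Iio i := fun j hj =>
      mem_Iio.mpr (lt_of_not_ge fun hij => hi (hS hij hj))
    simpa using card_le_card subset_Iio

lemma mem_iff_lt_card_of_sorted {S : Finset (Fin n)} (hS : ∀ x ∈ S, ∀ y ∉ S, prec x y)
    (he : ∀ i j, i < j → prec (e i) (e j)) (i : Fin n) : e i ∈ S ↔ (i : ℕ) < #S := by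
  have lower : IsLowerSet (S.map e.symm.toEmbedding : Set (Fin n)) := by
    intro j i hij hj
    simp only [mem_coe, mem_map_equiv, Equiv.symm_symm] at hj ⊢
    by_contra hi
    exact hij.not_gt ((prec_iff_lt_of_sorted he j i).mp (hS _ hj _ hi))
  simpa only [mem_map_equiv, Equiv.symm_symm, card_map] using
    mem_iff_lt_card_of_isLowerSet lower i

lemma sum_pow_wordInv_comp {α R : Type*} [LinearOrder α] [Fintype α] [OrderBot α] [CommSemiring R]
    (p : R) (ν : α → ℕ) {S : Finset (Fin n)}
    (he : ∀ i, e i ∈ S ↔ (i : ℕ) < #S) :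
    ∑ w : Fin n → α with wordContent w = ν ∧ ∀ x ∈ S, w x ≠ ⊥, p ^ wordInv (w ∘ e) =
      wordGenFun p ν fun w : Fin n → α => ∀ i : Fin n, (i : ℕ) < #S → w i ≠ ⊥ := by
  refine sum_equiv (e.symm.arrowCongr (.refl α)) (fun w => ?_) fun _ _ => rfl
  have comp_eq : e.symm.arrowCongr (.refl α) w = w ∘ e := rfl
  simp only [mem_filter_univ, comp_eq, wordContent_comp_perm, Function.comp_apply, ← he]
  rw [e.forall_congr_right (q := fun x => x ∈ S → w x ≠ ⊥)]

end SortingPositions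

section ColoredSequences

open Finset

variable {r n k : ℕ}

/-- The order that a relation on `C(r,n)` induces on the positions `1, …, n` colored by `c`. -/
def positionLT (lt : CI → CI → Prop) (c : Fin n → ℕ) (x y : Fin n) : Prop :=
  lt ((x : ℕ) + 1, c x) ((y : ℕ) + 1, c y)

lemma positionLT_asymm {lt : CI → CI → Prop}
    (hasymm : ∀ x y, memC r n x → memC r n y → lt x y → ¬lt y x) {c : Fin n → ℕ}
    (hc : ∀ x, c x < r) : Std.Asymm (positionLT lt c) :=
  have letter_mem (x : Fin n) : memC r n ((x : ℕ) + 1, c x) := ⟨x.2, hc x, by simp⟩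
  ⟨fun x y => hasymm _ _ (letter_mem x) (letter_mem y)⟩

lemma isSorted.cval_eq {lt : CI → CI → Prop} {f : ColoredSeq r n} {γ : ColoredPerm r n}
    (h : isSorted lt f γ) (i : Fin n) : cval γ i = ((γ.perm i : ℕ) + 1, f.col (γ.perm i)) := by
  rw [cval, h.1]

lemma isSorted.invStat_eq_card {lt : CI → CI → Prop} {f : ColoredSeq r n} {γ : ColoredPerm r n}
    [Std.Asymm (positionLT lt f.col)] (h : isSorted lt f γ) :
    invStat lt γ =
      #{q : Fin n × Fin n | positionLT lt f.col q.1 q.2 ∧ f.val q.2 < f.val q.1} := by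
  refine card_equiv ((Equiv.prodComm _ _).trans (γ.perm.prodCongr γ.perm)) fun ⟨i, j⟩ => ?_
  simp only [mem_filter_univ, Equiv.trans_apply, Equiv.prodComm_apply, Prod.swap_prod_mk,
    Equiv.prodCongr_apply, Prod.map, h.cval_eq]
  constructor
  · rintro ⟨hij, hlt⟩
    refine ⟨hlt, (h.2 i j hij).resolve_right fun tie => ?_⟩
    rw [h.cval_eq, h.cval_eq] at tie
    exact Std.Asymm.asymm (r := positionLT lt f.col) _ _ hlt tie.2
  · rintro ⟨hlt, hval⟩
    refine ⟨lt_of_not_ge fun hji => ?_, hlt⟩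
    obtain hji | rfl := hji.lt_or_eq
    · obtain hlt' | tie := h.2 j i hji <;> omega
    · exact lt_irrefl _ hval

lemma isSorted.lenStat_eq {lt : CI → CI → Prop} {f : ColoredSeq r n} {γ : ColoredPerm r n}
    [Std.Asymm (positionLT lt f.col)] (h : isSorted lt f γ) {e : Equiv.Perm (Fin n)}
    (he : ∀ i j, i < j → positionLT lt f.col (e i) (e j)) :
    lenStat lt γ =
      wordInv (f.val ∘ e) + ∑ x : Fin n, if f.col x = 0 then 0 else (x : ℕ) + f.col x := by
  rw [lenStat, h.invStat_eq_card, wordInv_comp_eq_card_of_sorted f.val he, sum_filter,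
    ← Equiv.sum_comp γ.perm fun x => if f.col x = 0 then 0 else (x : ℕ) + f.col x]
  congr 1
  refine sum_congr rfl fun i _ => ?_
  rw [h.1]
  split_ifs <;> omega

lemma exists_sorting_perm {lt : CI → CI → Prop}
    (hsort : ∀ f : ColoredSeq r n, ∃ γ : ColoredPerm r n, isSorted lt f γ) (c : Fin n → Fin r) :
    ∃ e : Equiv.Perm (Fin n), ∀ i j, i < j → positionLT lt (fun x => (c x : ℕ)) (e i) (e j) := by
  obtain ⟨γ, hγ⟩ :=
    hsort ⟨fun _ => 1, fun x => c x, fun x => (c x).2, fun _ h => absurd h one_ne_zero⟩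
  refine ⟨γ.perm, fun i j hij => ?_⟩
  simpa only [positionLT, lt_irrefl, false_or, true_and, hγ.cval_eq] using hγ.2 i j hij

/-- The colors of a colored sequence. -/
def coloring (f : ColoredSeq r n) (x : Fin n) : Fin r := ⟨f.col x, f.col_lt x⟩

/-- The values of a colored sequence as a word over `{0, …, k}`. They are reduced modulo `k + 1`,
which changes nothing when they are at most `k`. -/
def valueWord (k : ℕ) (f : ColoredSeq r n) (x : Fin n) : Fin (k + 1) := Fin.ofNat (k + 1) (f.val x)

lemma val_lt_of_mem_NSet {nv : ℕ → ℕ} (hcomp : ∑ j ∈ range (k + 1), nv j = n)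
    {f : ColoredSeq r n} (hf : f ∈ NSet r n k nv) (x : Fin n) : f.val x < k + 1 := by
  have card_lt : #{x | f.val x ∈ range (k + 1)} = #(univ : Finset (Fin n)) := by
    rw [← sum_card_fiberwise_eq_card_filter, card_fin]
    exact (sum_congr rfl fun j hj => hf j (mem_range_succ_iff.mp hj)).trans hcomp
  exact mem_range.mp (card_filter_eq_iff.mp card_lt x (mem_univ x))

lemma valueWord_val {nv : ℕ → ℕ} (hcomp : ∑ j ∈ range (k + 1), nv j = n)
    {f : ColoredSeq r n} (hf : f ∈ NSet r n k nv) (x : Fin n) : (valueWord k f x : ℕ) = f.val x :=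
  Nat.mod_eq_of_lt (val_lt_of_mem_NSet hcomp hf x)

lemma mapsTo_coloring_valueWord [NeZero r] {nv : ℕ → ℕ} (hcomp : ∑ j ∈ range (k + 1), nv j = n) :
    Set.MapsTo (fun f : ColoredSeq r n => (coloring f, valueWord k f)) (NSet r n k nv)
      {q | wordContent q.2 = (fun j : Fin (k + 1) => nv j) ∧ ∀ x, q.1 x ≠ 0 → q.2 x ≠ ⊥} := by
  refine fun f hf => ⟨funext fun j => ?_, fun x hc (hv : valueWord k f x = 0) => hc ?_⟩
  · rw [← hf j j.is_le, wordContent]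
    simp only [Fin.ext_iff, valueWord_val hcomp hf]
  · have val_zero : f.val x = 0 := by rw [← valueWord_val hcomp hf, hv, Fin.val_zero]
    exact Fin.ext (f.zero_col x val_zero)

lemma injOn_coloring_valueWord {nv : ℕ → ℕ} (hcomp : ∑ j ∈ range (k + 1), nv j = n) :
    Set.InjOn (fun f : ColoredSeq r n => (coloring f, valueWord k f)) (NSet r n k nv) := by
  intro f hf g hg hfg
  obtain ⟨hc, hv⟩ := Prod.mk_inj.mp hfg
  have col_eq : f.col = g.col := funext fun x => congrArg Fin.val (congrFun hc x)
  have val_eq : f.val = g.val := funext fun x => by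
    rw [← valueWord_val hcomp hf, ← valueWord_val hcomp hg, hv]
  cases f
  cases g
  congr

lemma surjOn_coloring_valueWord [NeZero r] (nv : ℕ → ℕ) :
    Set.SurjOn (fun f : ColoredSeq r n => (coloring f, valueWord k f)) (NSet r n k nv)
      {q | wordContent q.2 = (fun j : Fin (k + 1) => nv j) ∧ ∀ x, q.1 x ≠ 0 → q.2 x ≠ ⊥} := by
  rintro ⟨c, w⟩ ⟨hw : wordContent w = _, hcw : ∀ x, c x ≠ 0 → w x ≠ ⊥⟩
  have zero_color (x : Fin n) (hx : (w x : ℕ) = 0) : (c x : ℕ) = 0 := by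
    rw [not_imp_not.mp (hcw x) (Fin.ext hx), Fin.val_zero]
  refine ⟨⟨fun x => w x, fun x => c x, fun x => (c x).2, zero_color⟩, fun j hj => ?_, ?_⟩
  · simpa only [wordContent, Fin.ext_iff] using congrFun hw ⟨j, Nat.lt_succ_of_le hj⟩
  · exact Prod.ext rfl (funext fun x => Fin.ext (Nat.mod_eq_of_lt (w x).2))

lemma wordInv_valueWord_comp {nv : ℕ → ℕ} (hcomp : ∑ j ∈ range (k + 1), nv j = n)
    {f : ColoredSeq r n} (hf : f ∈ NSet r n k nv) (e : Equiv.Perm (Fin n)) :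
    wordInv (valueWord k f ∘ e) = wordInv (f.val ∘ e) := by
  simp only [wordInv, Function.comp_apply, Fin.lt_def, valueWord_val hcomp hf]

variable {R : Type*} [CommSemiring R] (p a : R)

/-- The factor contributed to `p ^ lenStat * a ^ colf` by the position `x + 1` with color `c`,
inversions aside. -/
def colorWeight (x c : ℕ) : R := a ^ c * p ^ if c = 0 then 0 else x + c

lemma colorWeight_zero (x : ℕ) : colorWeight p a x 0 = 1 := by
  rw [colorWeight, if_pos rfl, pow_zero, pow_zero, mul_one]

lemma isSorted.weight_eq {lt : CI → CI → Prop} {f : ColoredSeq r n} {γ : ColoredPerm r n}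
    [Std.Asymm (positionLT lt f.col)] (h : isSorted lt f γ) {e : Equiv.Perm (Fin n)}
    (he : ∀ i j, i < j → positionLT lt f.col (e i) (e j)) :
    p ^ lenStat lt γ * a ^ colf f =
      (∏ x : Fin n, colorWeight p a x (f.col x)) * p ^ wordInv (f.val ∘ e) := by
  simp only [h.lenStat_eq he, colf, colorWeight, prod_mul_distrib, prod_pow_eq_pow_sum, pow_add]
  ring

lemma sum_colorWeight_ne_zero [NeZero r] (x : ℕ) :
    ∑ c : Fin r with c ≠ 0, colorWeight p a x c = (∑ j ∈ Icc 1 (r - 1), a ^ j * p ^ j) * p ^ x := by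
  have r_pos := Nat.pos_of_neZero r
  have nonzero_colors : (range r).filter (· ≠ 0) = Icc 1 (r - 1) := by
    ext j
    simp only [mem_filter, mem_range, mem_Icc]
    omega
  calc ∑ c : Fin r with c ≠ 0, colorWeight p a x c
    _ = ∑ c ∈ range r with c ≠ 0, colorWeight p a x c := by
      rw [sum_filter, sum_filter, ← Fin.sum_univ_eq_sum_range]
      simp only [ne_eq, Fin.ext_iff, Fin.val_zero]
    _ = (∑ j ∈ Icc 1 (r - 1), a ^ j * p ^ j) * p ^ x := by
      rw [nonzero_colors, sum_mul]
      refine sum_congr rfl fun j hj => ?_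
      rw [colorWeight, if_neg (Nat.one_le_iff_ne_zero.mp (mem_Icc.mp hj).1)]
      ring

lemma finsum_mem_NSet_eq_sum_coloring [NeZero r] {lt : CI → CI → Prop}
    (hasymm : ∀ x y, memC r n x → memC r n y → lt x y → ¬lt y x)
    (hdom : ∀ i j c : ℕ, 1 ≤ i → i ≤ n → 1 ≤ j → j ≤ n → 1 ≤ c → c < r → lt (j, c) (i, 0))
    {nv : ℕ → ℕ} (hcomp : ∑ j ∈ range (k + 1), nv j = n)
    {gam : ColoredSeq r n → ColoredPerm r n} (hgam : ∀ f, isSorted lt f (gam f)) :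
    ∑ᶠ f ∈ NSet r n k nv, p ^ lenStat lt (gam f) * a ^ colf f =
      ∑ c : Fin n → Fin r, (∏ x : Fin n, colorWeight p a x (c x)) *
        wordGenFun p (fun j : Fin (k + 1) => nv j) fun w : Fin n → Fin (k + 1) =>
          ∀ i : Fin n, (i : ℕ) < #{x | c x ≠ 0} → w i ≠ ⊥ := by
  have asymm (c : Fin n → Fin r) := positionLT_asymm hasymm fun x => (c x).2
  choose e he using exists_sorting_perm (n := n) (r := r) (lt := lt) fun f => ⟨gam f, hgam f⟩
  have mem_support_iff (c : Fin n → Fin r) (i : Fin n) :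
      e c i ∈ ({x | c x ≠ 0} : Finset (Fin n)) ↔ (i : ℕ) < #{x | c x ≠ 0} := by
    have := asymm c
    refine mem_iff_lt_card_of_sorted (fun x hx y hy => ?_) (he c) i
    rw [mem_filter_univ] at hx hy
    rw [positionLT, not_not.mp hy]
    exact hdom _ _ _ y.1.succ_pos y.2 x.1.succ_pos x.2
      (Nat.pos_of_ne_zero (Fin.val_ne_zero_iff.mpr hx)) (c x).2
  rw [finsum_mem_eq_of_bijOn _ ⟨mapsTo_coloring_valueWord hcomp, injOn_coloring_valueWord hcomp,
    surjOn_coloring_valueWord nv⟩ (g := fun q =>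
      (∏ x : Fin n, colorWeight p a x (q.1 x)) * p ^ wordInv (q.2 ∘ e q.1))]
  · rw [← coe_filter_univ, finsum_mem_coe_finset, sum_filter, Fintype.sum_prod_type]
    refine sum_congr rfl fun c _ => ?_
    rw [← sum_filter, ← sum_pow_wordInv_comp p _ (mem_support_iff c), mul_sum]
    simp only [mem_filter_univ]
  · intro f hf
    have : Std.Asymm (positionLT lt f.col) := asymm (coloring f)
    rw [(hgam f).weight_eq p a (he (coloring f)), wordInv_valueWord_comp hcomp hf]
    rfl

end ColoredSequences

theorem stmt4_general {R : Type*} [CommSemiring R] (p a : R) (r n k : ℕ) (hr : 0 < r)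
    (lt : CI → CI → Prop) (hasymm : ∀ x y, memC r n x → memC r n y → lt x y → ¬lt y x)
    (hdom : ∀ i j c : ℕ, 1 ≤ i → i ≤ n → 1 ≤ j → j ≤ n → 1 ≤ c → c < r → lt (j, c) (i, 0))
    (nv : ℕ → ℕ) (hcomp : ∑ j ∈ Finset.range (k + 1), nv j = n)
    (gam : ColoredSeq r n → ColoredPerm r n) (hgam : ∀ f, isSorted lt f (gam f)) :
    (∑ᶠ f ∈ NSet r n k nv, p ^ lenStat lt (gam f) * a ^ colf f) *
      ∏ j ∈ Finset.range (k + 1), qFactorial p (nv j) =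
    (∏ i ∈ Finset.Ico (nv 0) n, (1 + ∑ j ∈ Finset.Icc 1 (r - 1), a ^ j * p ^ (j + i))) *
      qFactorial p n := by
  have : NeZero r := ⟨hr.ne'⟩
  have content_sum : ∑ j : Fin (k + 1), nv j = n := by rw [Fin.sum_univ_eq_sum_range, hcomp]
  have nv_zero_le : nv 0 ≤ n :=
    hcomp ▸ Finset.single_le_sum (fun _ _ => Nat.zero_le _) (Finset.mem_range.mpr k.succ_pos)
  set u := ∑ j ∈ Finset.Icc 1 (r - 1), a ^ j * p ^ j with hu
  have factor_eq (i : ℕ) : 1 + ∑ j ∈ Finset.Icc 1 (r - 1), a ^ j * p ^ (j + i) = 1 + u * p ^ i := by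
    simp only [hu, Finset.sum_mul, pow_add, mul_assoc]
  simp only [factor_eq]
  rw [finsum_mem_NSet_eq_sum_coloring p a hasymm hdom hcomp hgam,
    sum_pi_prod_mul_support (fun x c : Fin _ => colorWeight p a x c)
      (fun x => colorWeight_zero p a x) fun S =>
      wordGenFun p (fun j : Fin (k + 1) => nv j) fun w : Fin n → Fin (k + 1) =>
        ∀ i : Fin n, (i : ℕ) < S.card → w i ≠ ⊥,
    ← sum_finset_prod_mul_qDescFactorial p nv_zero_le u, Finset.sum_mul, Finset.prod_range]
  refine Finset.sum_congr rfl fun S _ => ?_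
  simp only [sum_colorWeight_ne_zero, ← hu]
  rw [mul_assoc, wordGenFun_ne_bot_mul_prod_qFactorial p (card_finset_fin_le S) content_sum]
  rfl

theorem stmt4 (r n k : ℕ) (hr : 0 < r) (hn : 0 < n) (O : PDOrder r n)
    (nv : ℕ → ℕ) (hcomp : ∑ j ∈ Finset.range (k + 1), nv j = n)
    (gam : ColoredSeq r n → ColoredPerm r n) (hgam : ∀ f, isSorted O.lt f (gam f)) :
    (∑ᶠ f ∈ NSet r n k nv,
        (MvPolynomial.X 0 : MvPolynomial (Fin 2) ℤ) ^ lenStat O.lt (gam f) *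
          MvPolynomial.X 1 ^ colf f) *
      ∏ j ∈ Finset.range (k + 1), qfactP (nv j) =
    (∏ i ∈ Finset.Ico (nv 0) n,
        (1 + ∑ j ∈ Finset.Icc 1 (r - 1),
          (MvPolynomial.X 1 : MvPolynomial (Fin 2) ℤ) ^ j * MvPolynomial.X 0 ^ (j + i))) *
      qfactP n :=
  stmt4_general _ _ r n k hr O.lt
    (fun x y hx hy hxy hyx => O.irrefl x hx (O.trans x y x hx hy hx hxy hyx))
    (fun i j c _ => O.pos_dom i j c) nv hcomp gam hgam
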